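/- The unique information is bounded above by mutual information: Un(X→Z|Y) ≤ I(X;Z), where I(X;Z) is the mutual information computed from the (𝒳,𝒵)-marginal of p. -/

import Mathlib

open Finset

/-- Shannon entropy of a distribution on a finite type (natural-log base). -/
noncomputable def ent {α : Type*} [Fintype α] (p : α → ℝ) : ℝ :=
  ∑ a, Real.negMulLog (p a)

/-- Mutual information between the two coordinates of a joint distribution. -/
noncomputable def mutInfo {α β : Type*} [Fintype α] [Fintype β] (q : α × β → ℝ) : ℝ :=
  ent (fun a => ∑ b, q (a, b)) + ent (fun b => ∑ a, q (a, b)) - ent q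

/-- Conditional entropy of the first coordinate given the second: H(A|B) = H(A,B) - H(B). -/
noncomputable def condEntFst {α β : Type*} [Fintype α] [Fintype β] (q : α × β → ℝ) : ℝ :=
  ent q - ent (fun b => ∑ a, q (a, b))

/-- Conditional entropy of the second coordinate given the first: H(B|A) = H(A,B) - H(A). -/
noncomputable def condEntSnd {α β : Type*} [Fintype α] [Fintype β] (q : α × β → ℝ) : ℝ :=
  ent q - ent (fun a => ∑ b, q (a, b))

section PID

variable {X Y Z : Type*} [Fintype X] [Fintype Y] [Fintype Z]

/-- 𝒳-marginal of a joint distribution on 𝒳×𝒴×𝒵. -/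
noncomputable def pX (p : X × Y × Z → ℝ) (x : X) : ℝ := ∑ y, ∑ z, p (x, y, z)

/-- 𝒴-marginal. -/
noncomputable def pY (p : X × Y × Z → ℝ) (y : Y) : ℝ := ∑ x, ∑ z, p (x, y, z)

/-- 𝒵-marginal. -/
noncomputable def pZ (p : X × Y × Z → ℝ) (z : Z) : ℝ := ∑ x, ∑ y, p (x, y, z)

/-- The do-operation: q(x,y,z) = p(x,y,z)·c(z)/p_Z(z) if p_Z(z) > 0, else 0. -/
noncomputable def doOp (p : X × Y × Z → ℝ) (c : Z → ℝ) : X × Y × Z → ℝ :=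
  fun t => if 0 < pZ p t.2.2 then p t * c t.2.2 / pZ p t.2.2 else 0

/-- (𝒳,𝒵)-marginal. -/
noncomputable def margXZ (p : X × Y × Z → ℝ) : X × Z → ℝ := fun t => ∑ y, p (t.1, y, t.2)

/-- (𝒴,𝒵)-marginal. -/
noncomputable def margYZ (p : X × Y × Z → ℝ) : Y × Z → ℝ := fun t => ∑ x, p (x, t.1, t.2)

/-- (𝒳,𝒴)-marginal. -/
noncomputable def margXY (p : X × Y × Z → ℝ) : X × Y → ℝ := fun t => ∑ z, p (t.1, t.2, z)

/-- c_y(z) = Pr(Z = z | Y = y). -/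
noncomputable def cy (p : X × Y × Z → ℝ) (y : Y) : Z → ℝ :=
  fun z => (∑ x, p (x, y, z)) / pY p y

/-- The distribution of (A_y, B_y, C_y) = do(p | c_y). -/
noncomputable def doy (p : X × Y × Z → ℝ) (y : Y) : X × Y × Z → ℝ := doOp p (cy p y)

/-- c^x(z) = Pr(Z = z | X = x). -/
noncomputable def cx (p : X × Y × Z → ℝ) (x : X) : Z → ℝ :=
  fun z => (∑ y, p (x, y, z)) / pX p x

/-- The distribution of (A^x, B^x, C^x) = do(p | c^x). -/
noncomputable def dox (p : X × Y × Z → ℝ) (x : X) : X × Y × Z → ℝ := doOp p (cx p x)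

/-- Unique information Un(X→Z|Y) = Σ_{y : p_Y(y)>0} p_Y(y)·I(A_y;C_y). -/
noncomputable def Un (p : X × Y × Z → ℝ) : ℝ :=
  ∑ y ∈ Finset.univ.filter (fun y => 0 < pY p y), pY p y * mutInfo (margXZ (doy p y))

/-- Unique information Un(Y→Z|X) = Σ_{x : p_X(x)>0} p_X(x)·I(B^x;C^x). -/
noncomputable def UnYX (p : X × Y × Z → ℝ) : ℝ :=
  ∑ x ∈ Finset.univ.filter (fun x => 0 < pX p x), pX p x * mutInfo (margYZ (dox p x))

/-- Redundant information Red(X,Y→Z) = I(X;Z) − Un(X→Z|Y). -/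
noncomputable def Red (p : X × Y × Z → ℝ) : ℝ := mutInfo (margXZ p) - Un p

/-- Conditional mutual information I(X;Z|Y) = H(X,Y) + H(Y,Z) − H(Y) − H(X,Y,Z). -/
noncomputable def condMI (p : X × Y × Z → ℝ) : ℝ :=
  ent (margXY p) + ent (margYZ p) - ent (pY p) - ent p

/-- Synergistic information Syn(X,Y→Z) = I(X;Z|Y) − Un(X→Z|Y). -/
noncomputable def Syn (p : X × Y × Z → ℝ) : ℝ := condMI p - Un p

end PID

/-!
Intervening on `Z` leaves the conditional law of `X` given `Z` unchanged, so `I(A;C)` under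
`do(p|c)` is the mutual information across a fixed channel with input distribution `c`, and this
is a concave function of `c`. The distributions `c_y` average to `p_Z` under `p_Y`, and `do(p|p_Z)`
is `p` itself, so Jensen's inequality bounds the average of the `I(A_y;C_y)` by `I(X;Z)`.
-/

section Concavity

theorem concaveOn_finset_sum {ι 𝕜 E β : Type*} [Semiring 𝕜] [PartialOrder 𝕜] [AddCommMonoid E]
    [SMul 𝕜 E] [AddCommMonoid β] [PartialOrder β] [IsOrderedAddMonoid β] [Module 𝕜 β] {s : Set E}
    (hs : Convex 𝕜 s) {t : Finset ι} {f : ι → E → β} (hf : ∀ i ∈ t, ConcaveOn 𝕜 s (f i)) :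
    ConcaveOn 𝕜 s fun x => ∑ i ∈ t, f i x := by
  simpa only [← Finset.sum_apply] using
    sum_induction f (ConcaveOn 𝕜 s) (fun _ _ => .add) (concaveOn_const 0 hs) hf

variable {A B : Type*} [Fintype A] [Fintype B]

/-- When every column of `k` sums to `1`, this is `I(A;B) = H(A) - H(A|B)`; otherwise the term
`negMulLog (∑ a, k (a, b))` compensates and is still linear in `c`. -/
theorem mutInfo_mul_snd (k : A × B → ℝ) (c : B → ℝ) :
    mutInfo (fun t => k t * c t.2) =
      ∑ a, Real.negMulLog (∑ b, k (a, b) * c b) +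
        ∑ b, (Real.negMulLog (∑ a, k (a, b)) - ∑ a, Real.negMulLog (k (a, b))) * c b := by
  have marginal_snd (b : B) : Real.negMulLog (∑ a, k (a, b) * c b) =
      c b * Real.negMulLog (∑ a, k (a, b)) + (∑ a, k (a, b)) * Real.negMulLog (c b) := by
    rw [← sum_mul, Real.negMulLog_mul]
  have joint (b : B) : ∑ a, Real.negMulLog (k (a, b) * c b) =
      c b * ∑ a, Real.negMulLog (k (a, b)) + (∑ a, k (a, b)) * Real.negMulLog (c b) := by
    simp only [Real.negMulLog_mul, sum_add_distrib, mul_sum, sum_mul]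
  simp only [mutInfo, ent, Fintype.sum_prod_type_right, marginal_snd, joint, add_sub_assoc,
    ← sum_sub_distrib]
  congr! 2
  ring

theorem concaveOn_negMulLog_sum_mul {v : B → ℝ} (hv : 0 ≤ v) :
    ConcaveOn ℝ (Set.Ici 0) fun c : B → ℝ => Real.negMulLog (∑ b, v b * c b) :=
  (Real.concaveOn_negMulLog.comp_linearMap (dotProductBilin ℝ ℝ v)).subset
    (fun _ hc => sum_nonneg fun b _ => mul_nonneg (hv b) (hc b)) (convex_Ici 0)

theorem concaveOn_mutInfo_mul_snd {k : A × B → ℝ} (hk : 0 ≤ k) :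
    ConcaveOn ℝ (Set.Ici 0) fun c : B → ℝ => mutInfo fun t => k t * c t.2 := by
  simp only [mutInfo_mul_snd]
  exact (concaveOn_finset_sum (convex_Ici 0) fun a _ =>
    concaveOn_negMulLog_sum_mul fun b => hk (a, b)).add
      ((dotProductBilin ℝ ℝ _).concaveOn (convex_Ici 0))

end Concavity

section Marginals

variable {X Y Z : Type*} [Fintype X] {p : X × Y × Z → ℝ}

theorem sum_pY [Fintype Y] [Fintype Z] (p : X × Y × Z → ℝ) : ∑ y, pY p y = ∑ t, p t := by
  simp only [pY, Fintype.sum_prod_type]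
  exact sum_comm

theorem sum_margYZ [Fintype Y] (p : X × Y × Z → ℝ) (z : Z) :
    ∑ y, margYZ p (y, z) = pZ p z :=
  sum_comm

theorem margYZ_nonneg (hp : 0 ≤ p) : 0 ≤ margYZ p :=
  fun _ => sum_nonneg fun _ _ => hp _

theorem pY_nonneg [Fintype Z] (hp : 0 ≤ p) : 0 ≤ pY p :=
  fun _ => sum_nonneg fun _ _ => sum_nonneg fun _ _ => hp _

theorem margYZ_le_pY [Fintype Z] (hp : 0 ≤ p) (y : Y) (z : Z) : margYZ p (y, z) ≤ pY p y := by
  rw [pY, sum_comm]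
  exact single_le_sum (f := fun z => margYZ p (y, z)) (fun z _ => margYZ_nonneg hp (y, z))
    (mem_univ z)

theorem le_pZ [Fintype Y] (hp : 0 ≤ p) (t : X × Y × Z) : p t ≤ pZ p t.2.2 :=
  calc
    p t ≤ ∑ y, p (t.1, y, t.2.2) :=
      single_le_sum (f := fun y => p (t.1, y, t.2.2)) (fun _ _ => hp _) (mem_univ t.2.1)
    _ ≤ pZ p t.2.2 :=
      single_le_sum (f := fun x => ∑ y, p (x, y, t.2.2))
        (fun _ _ => sum_nonneg fun _ _ => hp _) (mem_univ t.1)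

theorem cy_nonneg [Fintype Z] (hp : 0 ≤ p) (y : Y) : 0 ≤ cy p y :=
  fun z => div_nonneg (margYZ_nonneg hp (y, z)) (pY_nonneg hp y)

theorem pY_mul_cy [Fintype Z] (hp : 0 ≤ p) (y : Y) (z : Z) :
    pY p y * cy p y z = margYZ p (y, z) :=
  mul_div_cancel_of_imp' fun h =>
    le_antisymm ((margYZ_le_pY hp y z).trans_eq h) (margYZ_nonneg hp (y, z))

theorem sum_pY_smul_cy [Fintype Y] [Fintype Z] (hp : 0 ≤ p) : ∑ y, pY p y • cy p y = pZ p := by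
  ext z
  simp only [Finset.sum_apply, Pi.smul_apply, smul_eq_mul, pY_mul_cy hp, sum_margYZ]

end Marginals

section Intervention

variable {X Y Z : Type*} [Fintype X] [Fintype Y] {p : X × Y × Z → ℝ}

theorem doOp_nonneg (hp : 0 ≤ p) {c : Z → ℝ} (hc : 0 ≤ c) : 0 ≤ doOp p c := by
  intro t
  unfold doOp
  split_ifs with h
  · exact div_nonneg (mul_nonneg (hp t) (hc t.2.2)) h.le
  · rfl

theorem doOp_pZ (hp : 0 ≤ p) : doOp p (pZ p) = p := by
  ext t
  unfold doOp
  split_ifs with h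
  · exact mul_div_cancel_right₀ _ h.ne'
  · exact le_antisymm (hp t) ((le_pZ hp t).trans (not_lt.mp h))

/-- `do(p|1)` consists of the conditional weights `p(x,y|z)`, taken to be `0` where `p_Z(z) = 0`. -/
theorem margXZ_doOp (p : X × Y × Z → ℝ) (c : Z → ℝ) :
    margXZ (doOp p c) = fun t => margXZ (doOp p 1) t * c t.2 := by
  ext t
  simp only [margXZ, doOp, Pi.one_apply, mul_one, sum_mul, ite_mul, zero_mul, div_mul_eq_mul_div]

theorem concaveOn_mutInfo_margXZ_doOp [Fintype Z] (hp : 0 ≤ p) :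
    ConcaveOn ℝ (Set.Ici 0) fun c => mutInfo (margXZ (doOp p c)) := by
  have kernel_nonneg : 0 ≤ margXZ (doOp p 1) :=
    fun _ => sum_nonneg fun _ _ => doOp_nonneg hp zero_le_one _
  simpa only [← margXZ_doOp p] using concaveOn_mutInfo_mul_snd kernel_nonneg

theorem Un_eq_sum [Fintype Z] (hp : 0 ≤ p) :
    Un p = ∑ y, pY p y * mutInfo (margXZ (doOp p (cy p y))) :=
  sum_filter_of_ne fun y _ hy => (pY_nonneg hp y).lt_of_ne' (left_ne_zero_of_mul hy)

end Intervention

theorem stmt5 {X Y Z : Type*} [Fintype X] [Fintype Y] [Fintype Z]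
    [Nonempty X] [Nonempty Y] [Nonempty Z]
    (p : X × Y × Z → ℝ) (hp0 : ∀ t, 0 ≤ p t) (hp1 : ∑ t, p t = 1) :
    Un p ≤ mutInfo (margXZ p) := by
  have jensen := (concaveOn_mutInfo_margXZ_doOp hp0).le_map_sum (t := univ)
    (fun y _ => pY_nonneg hp0 y) ((sum_pY p).trans hp1) (fun y _ => cy_nonneg hp0 y)
  calc
    Un p = ∑ y, pY p y * mutInfo (margXZ (doOp p (cy p y))) := Un_eq_sum hp0
    _ ≤ mutInfo (margXZ (doOp p (∑ y, pY p y • cy p y))) := jensen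
    _ = mutInfo (margXZ p) := by rw [sum_pY_smul_cy hp0, doOp_pZ hp0]
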